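/- arXiv:1711.09794 — 2 statements merged into one kernel-verified Lean document; each statement's English description precedes it below -/
import Mathlib

section
/- For all β, γ ∈ B_∞, the braid γ lies in the image of the left translation L_β : y ↦ β ▷ y (that is, there exists β' ∈ B_∞ with β ▷ β' = γ) if and only if β ▷ γ = (β ▷ β) ▷ γ. -/
/-- The braid relations on generators indexed by `ℕ` (generator `i` stands for
the Artin generator `σ_{i+1}` of the paper). -/
def braidRels : Set (FreeGroup ℕ) :=
  {r | (∃ i j : ℕ, i + 2 ≤ j ∧
          r = .of i * .of j * (.of i)⁻¹ * (.of j)⁻¹) ∨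
       (∃ i : ℕ,
          r = .of i * .of (i + 1) * .of i *
              (.of (i + 1) * .of i * .of (i + 1))⁻¹)}

/-- The braid group on infinitely many strands. -/
abbrev Binf : Type := PresentedGroup braidRels

/-- `σ i` is the Artin generator `σ_{i+1}` of the paper (0-indexed). -/
def σ (i : ℕ) : Binf := PresentedGroup.of i

lemma mk_rel_eq_one {r : FreeGroup ℕ} (h : r ∈ braidRels) :
    PresentedGroup.mk braidRels r = 1 :=
  (QuotientGroup.eq_one_iff r).mpr (Subgroup.subset_normalClosure h)

lemma shift_lift_eq_one :
    ∀ r ∈ braidRels, FreeGroup.lift (fun n => σ (n + 1)) r = 1 := by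
  intro r hr
  have key : ∀ s ∈ braidRels, FreeGroup.lift (fun n => σ (n + 1)) s
      = PresentedGroup.mk braidRels (FreeGroup.map (· + 1) s) := by
    intro s _
    have : (FreeGroup.lift (fun n => σ (n + 1)) : FreeGroup ℕ →* Binf)
        = (PresentedGroup.mk braidRels).comp (FreeGroup.map (· + 1)) := by
      apply FreeGroup.ext_hom
      intro x
      simp [σ, PresentedGroup.of]
    rw [this]; rfl
  rw [key r hr]
  apply mk_rel_eq_one
  rcases hr with ⟨i, j, hij, rfl⟩ | ⟨i, rfl⟩
  · exact Or.inl ⟨i + 1, j + 1, by omega, by simp⟩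
  · exact Or.inr ⟨i + 1, by simp⟩

/-- The shift endomorphism of the braid group, mapping `σ i` to `σ (i+1)`. -/
def sh : Binf →* Binf := PresentedGroup.toGroup shift_lift_eq_one

@[simp] lemma sh_σ (i : ℕ) : sh (σ i) = σ (i + 1) :=
  PresentedGroup.toGroup.of shift_lift_eq_one

/-- The shifted-conjugation (selfdistributive) operation on `Binf`:
`β₁ ▷ β₂ = β₁ · sh β₂ · σ₁ · (sh β₁)⁻¹`. -/
def sc (β₁ β₂ : Binf) : Binf := β₁ * sh β₂ * σ 0 * (sh β₁)⁻¹

/-!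
Every `γ` has the form `β * ε * σ 0 * (sh β)⁻¹`. It lies in the image of left translation by `β` iff
`ε` is a shift, while expanding both sides of `β ▷ γ = (β ▷ β) ▷ γ` and cancelling turns this
equality into: `sh ε` commutes with `σ 0`. So one has to show that `sh ε` commutes with `σ 0` only
if `ε` is a shift.

By Garside's theory the monoid of positive braids is cancellative, has least common right multiples
and embeds in the braid group, each braid being a fraction of two positive ones. If `ε = a / b` in
lowest terms, commutation with `σ 0` gives `σ 0 * sh a = sh a * w` and `σ 0 * sh b = sh b * w` for a
positive `w`. Such an equality forces each letter `σ (i + 1)` of `sh a` to commute with `σ 0`: the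
letter `σ 1` would bring in the least common multiple `σ 0 * σ 1 * σ 0` and hence a letter `σ 0` in
the word `sh a`. So `a` and `b` avoid `σ 0`, that is, they are shifts.
-/

open Filter

/-! ### Least common multiples and fractions -/

/-- `m` is a least common right multiple of `u` and `v`, for left divisibility in a monoid that need
not be commutative. -/
def IsLcm {M : Type*} [Monoid M] (u v m : M) : Prop :=
  ∀ y, m ∣ y ↔ u ∣ y ∧ v ∣ y

namespace IsLcm

variable {M : Type*} [Monoid M] {u v w m n : M}

lemma dvd_left (h : IsLcm u v m) : u ∣ m := ((h m).1 dvd_rfl).1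

lemma dvd_right (h : IsLcm u v m) : v ∣ m := ((h m).1 dvd_rfl).2

lemma dvd (h : IsLcm u v m) (hu : u ∣ w) (hv : v ∣ w) : m ∣ w := (h w).2 ⟨hu, hv⟩

lemma of_dvd (h : u ∣ v) : IsLcm u v v := fun _ => ⟨fun hv => ⟨h.trans hv, hv⟩, And.right⟩

lemma symm (h : IsLcm u v m) : IsLcm v u m := fun y => (h y).trans and_comm

lemma of_intermediate (hm : IsLcm u w m) (hn : IsLcm m v n)
    (hw : ∀ y, u ∣ y → v ∣ y → w ∣ y) : IsLcm u v n := fun y => by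
  rw [hn y, hm y]
  exact ⟨fun h => ⟨h.1.1, h.2⟩, fun h => ⟨⟨h.1, hw y h.1 h.2⟩, h.2⟩⟩

variable [IsLeftCancelMul M]

lemma mul_left (c : M) (h : IsLcm u v m) : IsLcm (c * u) (c * v) (c * m) := fun y => by
  have cancel (a b : M) : c * a ∣ c * b ↔ a ∣ b := by
    simp only [dvd_def, mul_assoc, mul_right_inj]
  constructor
  · exact fun hm => ⟨(mul_dvd_mul_left c h.dvd_left).trans hm,
      (mul_dvd_mul_left c h.dvd_right).trans hm⟩
  · rintro ⟨hu, hv⟩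
    obtain ⟨y, rfl⟩ := (Dvd.intro u rfl : c ∣ c * u).trans hu
    rw [cancel] at hu hv ⊢
    exact h.dvd hu hv

lemma exists_eq_mul {a b x y : M} (h : IsLcm u v (u * a)) (hab : u * a = v * b)
    (hxy : u * x = v * y) : ∃ w, x = a * w ∧ y = b * w := by
  obtain ⟨w, hw⟩ := h.dvd (Dvd.intro x rfl) (Dvd.intro y hxy.symm)
  refine ⟨w, mul_left_cancel (a := u) (by rw [hw, mul_assoc]), mul_left_cancel (a := v) ?_⟩
  rw [← hxy, hw, hab, mul_assoc]

end IsLcm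

section

universe u

variable {M : Type u} [Monoid M]

lemma eq_one_or_exists_dvd {S : Set M} (hS : Submonoid.closure S = ⊤) (x : M) :
    x = 1 ∨ ∃ s ∈ S, s ∣ x := by
  have hx : x ∈ Submonoid.closure S := hS ▸ Submonoid.mem_top x
  induction hx using Submonoid.closure_induction_left with
  | one => exact Or.inl rfl
  | mul_left s hs x _ _ => exact Or.inr ⟨s, hs, Dvd.intro x rfl⟩

/- Induction on the length of the common multiple `x`. Two divisors of `x` with a common first
letter are handled by cancelling it; if the first letters of `u` and `v` are `s` and `t`, then
going from `u` to its lcm with `lcm(s, t)`, and from there to the lcm with `v`, only involves such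
pairs. -/
theorem exists_isLcm_of_generators [IsLeftCancelMul M] {S : Set M}
    (hS : Submonoid.closure S = ⊤) (len : M → ℕ) (hlen : ∀ s ∈ S, ∀ x, len x < len (s * x))
    (hlcm : ∀ s ∈ S, ∀ t ∈ S, ∀ x, s ∣ x → t ∣ x → ∃ m, IsLcm s t m) {u v x : M}
    (hu : u ∣ x) (hv : v ∣ x) : ∃ m, IsLcm u v m := by
  induction hn : len x using Nat.strong_induction_on generalizing x u v with
  | _ n ih =>
  subst hn
  have exists_of_common_letter {s u v : M} (hs : s ∈ S) (hsu : s ∣ u) (hsv : s ∣ v) (hu : u ∣ x)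
      (hv : v ∣ x) : ∃ m, IsLcm u v m := by
    obtain ⟨u, rfl⟩ := hsu
    obtain ⟨v, rfl⟩ := hsv
    obtain ⟨p, rfl⟩ := hu
    obtain ⟨q, hq⟩ := hv
    have hpq : u * p = v * q := mul_left_cancel (a := s) (by simpa only [mul_assoc] using hq)
    obtain ⟨m, hm⟩ := ih (len (u * p)) (by rw [mul_assoc]; exact hlen s hs _)
      (Dvd.intro p rfl) (Dvd.intro q hpq.symm) rfl
    exact ⟨s * m, hm.mul_left s⟩
  rcases eq_one_or_exists_dvd hS u with rfl | ⟨s, hs, hsu⟩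
  · exact ⟨v, .of_dvd (one_dvd v)⟩
  rcases eq_one_or_exists_dvd hS v with rfl | ⟨t, ht, htv⟩
  · exact ⟨u, (IsLcm.of_dvd (one_dvd u)).symm⟩
  obtain ⟨l, hl⟩ := hlcm s hs t ht x (hsu.trans hu) (htv.trans hv)
  have hlx : l ∣ x := hl.dvd (hsu.trans hu) (htv.trans hv)
  obtain ⟨m, hm⟩ := exists_of_common_letter hs hsu hl.dvd_left hu hlx
  obtain ⟨n, hn⟩ := exists_of_common_letter ht (hl.dvd_right.trans hm.dvd_right) htv
    (hm.dvd hu hlx) hv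
  exact ⟨n, hm.of_intermediate hn fun _ huy hvy => hl.dvd (hsu.trans huy) (htv.trans hvy)⟩

lemma mul_dvd_pow_succ {a x z : M} {l : ℕ} (h : Commute a z) (ha : a ∣ z) (hx : x ∣ z ^ l) :
    a * x ∣ z ^ (l + 1) := by
  obtain ⟨b, hb⟩ := ha
  obtain ⟨c, hc⟩ := hx
  refine ⟨c * b, ?_⟩
  calc z ^ (l + 1) = z ^ l * (a * b) := by rw [pow_succ, ← hb]
    _ = a * z ^ l * b := by rw [← mul_assoc, (h.pow_right l).eq]
    _ = a * x * (c * b) := by rw [hc]; simp only [mul_assoc]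

theorem exists_injective_hom_to_group [IsCancelMul M]
    (hM : ∀ x y : M, ∃ p q, p * x = q * y) :
    ∃ (G : Type u) (_ : Group G) (f : M →* G), Function.Injective f := by
  choose p q hpq using hM
  let _ : OreLocalization.OreSet (⊤ : Submonoid M) :=
    { ore_right_cancel := fun _ _ _ h => ⟨1, congrArg _ (mul_right_cancel h)⟩
      oreNum := fun r s => q r s
      oreDenom := fun r s => ⟨p r s, trivial⟩
      ore_eq := fun r s => hpq r s }
  let f : M →* OreLocalization (⊤ : Submonoid M) M := OreLocalization.numeratorHom
  refine ⟨(OreLocalization (⊤ : Submonoid M) M)ˣ, inferInstance,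
    IsUnit.liftRight f fun x =>
      OreLocalization.numerator_isUnit (⟨x, trivial⟩ : (⊤ : Submonoid M)), fun x y h => ?_⟩
  have hf : f x = f y := congrArg Units.val h
  obtain ⟨c, d, hc, hd⟩ := OreLocalization.oreDiv_eq_iff.1 hf
  simp only [Submonoid.smul_def, smul_eq_mul, OneMemClass.coe_one, mul_one] at hc hd
  exact (mul_left_cancel (hc.trans (by rw [hd]))).symm

theorem exists_map_mul_eq_map {G : Type*} [Group G] {f : M →* G}
    (hM : ∀ x y : M, ∃ p q, p * x = q * y) (hf : Subgroup.closure (Set.range f) = ⊤) (e : G) :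
    ∃ u v, f u * e = f v := by
  have he : e ∈ Subgroup.closure (Set.range f) := hf ▸ Subgroup.mem_top e
  induction he using Subgroup.closure_induction with
  | mem _ hx =>
    obtain ⟨v, rfl⟩ := hx
    exact ⟨1, v, by rw [map_one, one_mul]⟩
  | one => exact ⟨1, 1, mul_one _⟩
  | mul x y _ _ hx hy =>
    obtain ⟨u, v, h⟩ := hx
    obtain ⟨u', v', h'⟩ := hy
    obtain ⟨p, q, hpq⟩ := hM v u'
    refine ⟨p * u, q * v', ?_⟩
    calc f (p * u) * (x * y) = f p * (f u * x) * y := by rw [map_mul]; group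
      _ = f (p * v) * y := by rw [h, map_mul]
      _ = f (q * v') := by rw [hpq, map_mul, map_mul, mul_assoc, h']
  | inv x _ hx =>
    obtain ⟨u, v, h⟩ := hx
    exact ⟨v, u, by rw [← h, mul_inv_cancel_right]⟩

end

/-! ### The monoid of positive braids -/

/-- The defining relations of the monoid of positive braids, with `i` standing for `σ i`. -/
inductive BraidMonoidRel : FreeMonoid ℕ → FreeMonoid ℕ → Prop
  | comm {i j : ℕ} (h : i + 2 ≤ j) : BraidMonoidRel (.of i * .of j) (.of j * .of i)
  | braid (i : ℕ) : BraidMonoidRel (.of i * .of (i + 1) * .of i)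
      (.of (i + 1) * .of i * .of (i + 1))

/-- The monoid of positive braids on infinitely many strands. -/
abbrev BraidMonoid : Type := PresentedMonoid BraidMonoidRel

namespace BraidMonoid

/-- The positive Artin generators. -/
def gen (i : ℕ) : BraidMonoid := PresentedMonoid.of BraidMonoidRel i

/-- The index relation under which two Artin generators commute. -/
abbrev Far (i j : ℕ) : Prop := i + 2 ≤ j ∨ j + 2 ≤ i

/-- The index relation under which two Artin generators satisfy the braid relation. -/
abbrev Adj (i j : ℕ) : Prop := i + 1 = j ∨ j + 1 = i

lemma commute_gen {i j : ℕ} (h : Far i j) : Commute (gen i) (gen j) := by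
  rcases h with h | h
  · exact PresentedMonoid.mk_eq_mk_of_rel (.comm h)
  · exact (PresentedMonoid.mk_eq_mk_of_rel (.comm h)).symm

lemma gen_braid {i j : ℕ} (h : Adj i j) :
    gen i * gen j * gen i = gen j * gen i * gen j := by
  rcases h with rfl | rfl
  · exact PresentedMonoid.mk_eq_mk_of_rel (.braid i)
  · exact (PresentedMonoid.mk_eq_mk_of_rel (.braid j)).symm

lemma gen_braid_mul {i j : ℕ} (h : Adj i j) (x : BraidMonoid) :
    gen i * (gen j * (gen i * x)) = gen j * (gen i * (gen j * x)) := by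
  simpa only [mul_assoc] using congrArg (· * x) (gen_braid h)

lemma closure_range_gen : Submonoid.closure (Set.range gen) = ⊤ :=
  PresentedMonoid.closure_range_of BraidMonoidRel

@[elab_as_elim]
lemma gen_induction {p : BraidMonoid → Prop} (one : p 1)
    (gen_mul : ∀ i x, p x → p (gen i * x)) (x : BraidMonoid) : p x := by
  have hx : x ∈ Submonoid.closure (Set.range gen) := closure_range_gen ▸ Submonoid.mem_top x
  induction hx using Submonoid.closure_induction_left with
  | one => exact one
  | mul_left s hs x _ ih =>
    obtain ⟨i, rfl⟩ := hs
    exact gen_mul i x ih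

section Lift

variable {N : Type*} [Monoid N] (f : ℕ → N) (hcomm : ∀ i j, i + 2 ≤ j → f i * f j = f j * f i)
  (hbraid : ∀ i, f i * f (i + 1) * f i = f (i + 1) * f i * f (i + 1))

/-- The universal property of the monoid of positive braids. -/
def lift : BraidMonoid →* N :=
  PresentedMonoid.lift f fun _ _ h => by
    cases h with
    | comm h => simpa only [map_mul, FreeMonoid.lift_eval_of] using hcomm _ _ h
    | braid i => simpa only [map_mul, FreeMonoid.lift_eval_of] using hbraid i

@[simp] lemma lift_gen (i : ℕ) : lift f hcomm hbraid (gen i) = f i := rfl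

end Lift

/-- The word length of a positive braid; it is well defined since the relations are homogeneous. -/
def len (x : BraidMonoid) : ℕ :=
  (lift (fun _ => Multiplicative.ofAdd 1) (fun _ _ _ => rfl) (fun _ => rfl) x).toAdd

@[simp] lemma len_mul (x y : BraidMonoid) : len (x * y) = len x + len y := by
  simp only [len, map_mul, toAdd_mul]

@[simp] lemma len_gen (i : ℕ) : len (gen i) = 1 := rfl

/-- The complement of `gen i` in its least common right multiple with `gen j`, so that
`gen i * compl i j = gen j * compl j i` is this multiple. -/
def compl (i j : ℕ) : BraidMonoid :=
  if i = j then 1 else if Far i j then gen j else gen j * gen i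

@[simp] lemma compl_self (i : ℕ) : compl i i = 1 := if_pos rfl

lemma compl_of_far {i j : ℕ} (h : Far i j) : compl i j = gen j := by
  rw [compl, if_neg (by omega), if_pos h]

lemma compl_of_adj {i j : ℕ} (h : Adj i j) : compl i j = gen j * gen i := by
  rw [compl, if_neg (by omega), if_neg (by omega)]

lemma eq_or_far_or_adj (i j : ℕ) : i = j ∨ Far i j ∨ Adj i j := by omega

lemma gen_mul_compl (i j : ℕ) : gen i * compl i j = gen j * compl j i := by
  rcases eq_or_far_or_adj i j with rfl | h | h
  · rfl
  · rw [compl_of_far h, compl_of_far h.symm, (commute_gen h).eq]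
  · rw [compl_of_adj h, compl_of_adj h.symm, ← mul_assoc, ← mul_assoc, gen_braid h]

lemma commute_gen_compl {i j k : ℕ} (hi : Far k i) (hj : Far k j) :
    Commute (gen k) (compl i j) := by
  rcases eq_or_far_or_adj i j with rfl | h | h
  · rw [compl_self]; exact Commute.one_right _
  · rw [compl_of_far h]; exact commute_gen hj
  · rw [compl_of_adj h]; exact (commute_gen hj).mul_right (commute_gen hi)

/-- The equality `gen i * x = gen j * y` factors through the least common multiple of `gen i` and
`gen j`. -/
def FactorsThroughLcm (i j : ℕ) (x y : BraidMonoid) : Prop :=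
  ∃ z, x = compl i j * z ∧ y = compl j i * z

namespace FactorsThroughLcm

variable {i j : ℕ} {x y : BraidMonoid}

lemma refl (i : ℕ) (x : BraidMonoid) : FactorsThroughLcm i i x x :=
  ⟨x, by rw [compl_self, one_mul], by rw [compl_self, one_mul]⟩

lemma symm (h : FactorsThroughLcm i j x y) : FactorsThroughLcm j i y x := by
  obtain ⟨z, hx, hy⟩ := h
  exact ⟨z, hy, hx⟩

lemma mul_right (h : FactorsThroughLcm i j x y) (w : BraidMonoid) :
    FactorsThroughLcm i j (x * w) (y * w) := by
  obtain ⟨z, rfl, rfl⟩ := h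
  exact ⟨z * w, mul_assoc _ _ _, mul_assoc _ _ _⟩

lemma eq (h : FactorsThroughLcm i i x y) : x = y := by
  obtain ⟨z, rfl, rfl⟩ := h
  rfl

lemma of_far (h : Far i j) (z : BraidMonoid) : FactorsThroughLcm i j (gen j * z) (gen i * z) :=
  ⟨z, by rw [compl_of_far h], by rw [compl_of_far h.symm]⟩

lemma of_adj (h : Adj i j) (z : BraidMonoid) :
    FactorsThroughLcm i j (gen j * (gen i * z)) (gen i * (gen j * z)) :=
  ⟨z, by rw [compl_of_adj h, mul_assoc], by rw [compl_of_adj h.symm, mul_assoc]⟩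

lemma exists_of_far (hij : Far i j) (h : FactorsThroughLcm i j x y) :
    ∃ z, x = gen j * z ∧ y = gen i * z := by
  rwa [FactorsThroughLcm, compl_of_far hij, compl_of_far hij.symm] at h

lemma exists_of_adj (hij : Adj i j) (h : FactorsThroughLcm i j x y) :
    ∃ z, x = gen j * (gen i * z) ∧ y = gen i * (gen j * z) := by
  simpa only [FactorsThroughLcm, compl_of_adj hij, compl_of_adj hij.symm, mul_assoc] using h

end FactorsThroughLcm

/-- Garside's lemma for the equalities `gen i * a = gen j * b` with `len a < n`. -/
def GarsideBelow (n : ℕ) : Prop :=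
  ∀ ⦃i j a b⦄, len a < n → gen i * a = gen j * b → FactorsThroughLcm i j a b

namespace GarsideBelow

variable {n : ℕ} {i j k : ℕ} {x y p q : BraidMonoid}

lemma factors_of_far_far (H : GarsideBelow n) (hik : Far i k) (hkj : Far k j) (hp : len p < n)
    (h : gen i * p = gen j * q) : FactorsThroughLcm i j (gen k * p) (gen k * q) := by
  obtain ⟨z, rfl, rfl⟩ := H hp h
  exact ⟨gen k * z, (commute_gen_compl hik.symm hkj).left_comm z,
    (commute_gen_compl hkj hik.symm).left_comm z⟩

lemma factors_of_adj_far (H : GarsideBelow n) (hik : Adj i k) (hkj : Far k j)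
    (hp : len p + 2 ≤ n) (h : gen i * (gen k * p) = gen j * q) :
    FactorsThroughLcm i j (gen k * (gen i * p)) (gen k * q) := by
  have hfirst : FactorsThroughLcm i j (gen k * p) q :=
    H (by rw [len_mul, len_gen]; omega) h
  rcases eq_or_far_or_adj i j with rfl | hij | hij
  · omega
  · obtain ⟨r, hr, rfl⟩ := hfirst.exists_of_far hij
    obtain ⟨s, rfl, rfl⟩ := (H (by omega) hr).exists_of_far hkj
    rw [(commute_gen hij).left_comm, (commute_gen hkj).left_comm, gen_braid_mul hik.symm]
    exact .of_far hij _
  · obtain ⟨r, hr, rfl⟩ := hfirst.exists_of_adj hij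
    obtain ⟨s, rfl, hs⟩ := (H (by omega) hr).exists_of_far hkj
    have hlen : len (gen i * r) = len (gen k * s) := congrArg len hs
    simp only [len_mul, len_gen] at hlen hp
    obtain ⟨t, rfl, rfl⟩ := (H (by omega) hs).exists_of_adj hik
    have hx : gen k * (gen i * (gen j * (gen i * (gen k * t)))) =
        gen j * (gen i * (gen k * (gen i * (gen j * t)))) := by
      rw [gen_braid_mul hij, (commute_gen hkj).left_comm, (commute_gen hkj.symm).left_comm t,
        gen_braid_mul hik.symm]
    have hy : gen k * (gen i * (gen j * (gen k * (gen i * t)))) =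
        gen i * (gen j * (gen k * (gen i * (gen j * t)))) := by
      rw [(commute_gen hkj.symm).left_comm, gen_braid_mul hik.symm, gen_braid_mul hij,
        (commute_gen hkj).left_comm]
    rw [hx, hy]
    exact .of_adj hij _

lemma factors_of_adj_adj (H : GarsideBelow n) (hik : Adj i k) (hkj : Adj k j)
    (hp : len p + 2 ≤ n) (h : gen i * (gen k * p) = gen j * (gen k * q)) :
    FactorsThroughLcm i j (gen k * (gen i * p)) (gen k * (gen j * q)) := by
  have hfirst : FactorsThroughLcm i j (gen k * p) (gen k * q) :=
    H (by rw [len_mul, len_gen]; omega) h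
  rcases eq_or_far_or_adj i j with rfl | hij | hij
  · obtain rfl : p = q := (H (by omega) hfirst.eq).eq
    exact .refl _ _
  · obtain ⟨w, hw, hw'⟩ := hfirst.exists_of_far hij
    have hlen : len (gen k * p) = len (gen j * w) := congrArg len hw
    have hlen' : len (gen k * q) = len (gen i * w) := congrArg len hw'
    simp only [len_mul, len_gen] at hlen hlen'
    obtain ⟨s, rfl, rfl⟩ := (H (by omega) hw).exists_of_adj hkj
    obtain ⟨t, rfl, ht⟩ := (H (by omega) hw').exists_of_adj hik.symm
    simp only [len_mul, len_gen] at hp hlen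
    have hst : gen j * s = gen i * t := (H (by rw [len_mul, len_gen]; omega) ht).eq
    obtain ⟨r, rfl, rfl⟩ := (H (by omega) hst).exists_of_far hij.symm
    have hx : gen k * (gen i * (gen j * (gen k * (gen i * r)))) =
        gen j * (gen k * (gen j * (gen i * (gen k * r)))) := by
      rw [(commute_gen hij).left_comm, gen_braid_mul hik, gen_braid_mul hkj]
    have hy : gen k * (gen j * (gen i * (gen k * (gen j * r)))) =
        gen i * (gen k * (gen j * (gen i * (gen k * r)))) := by
      rw [(commute_gen hij.symm).left_comm, gen_braid_mul hkj.symm, gen_braid_mul hik.symm,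
        (commute_gen hij).left_comm]
    rw [hx, hy]
    exact .of_far hij _
  · omega

/- Chaining equalities is the hard case of Garside's lemma. The cases depend on how `k` lies with
respect to `i` and `j`; unless two of the indices coincide, the two factorizations of `z` give
equalities between shorter braids, which are factored through least common multiples in turn. -/
lemma factors_trans (H : GarsideBelow n) {z : BraidMonoid} (hx : len x ≤ n) (hy : len y ≤ n)
    (hxz : FactorsThroughLcm i k x z) (hzy : FactorsThroughLcm k j z y) :
    FactorsThroughLcm i j x y := by
  rcases eq_or_far_or_adj i k with rfl | hik | hik
  · rwa [hxz.eq]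
  · obtain ⟨p, rfl, rfl⟩ := hxz.exists_of_far hik
    rcases eq_or_far_or_adj k j with rfl | hkj | hkj
    · rw [← hzy.eq]; exact .of_far hik p
    · obtain ⟨q, h, rfl⟩ := hzy.exists_of_far hkj
      exact H.factors_of_far_far hik hkj (by rw [len_mul, len_gen] at hx; omega) h
    · obtain ⟨q, h, rfl⟩ := hzy.exists_of_adj hkj
      simp only [len_mul, len_gen] at hy
      exact (H.factors_of_adj_far hkj.symm hik.symm (by omega) h.symm).symm
  · obtain ⟨p, rfl, rfl⟩ := hxz.exists_of_adj hik
    simp only [len_mul, len_gen] at hx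
    rcases eq_or_far_or_adj k j with rfl | hkj | hkj
    · rw [← hzy.eq]; exact .of_adj hik p
    · obtain ⟨q, h, rfl⟩ := hzy.exists_of_far hkj
      exact H.factors_of_adj_far hik hkj (by omega) h
    · obtain ⟨q, h, rfl⟩ := hzy.exists_of_adj hkj
      exact H.factors_of_adj_adj hik hkj (by omega) h

end GarsideBelow

/-- The image of a word in the monoid of positive braids. -/
abbrev ofWord : FreeMonoid ℕ →* BraidMonoid := PresentedMonoid.mk BraidMonoidRel

lemma ofWord_of_mul (i : ℕ) (a : FreeMonoid ℕ) :
    ofWord (.of i * a) = gen i * ofWord a := rfl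

/-- The conclusion of Garside's lemma for two equivalent words, in terms of their first letters;
the empty word is only equivalent to itself. -/
def HeadsFactor (s t : FreeMonoid ℕ) : Prop :=
  (s = 1 ∧ t = 1) ∨ ∃ i a j b, s = .of i * a ∧ t = .of j * b ∧
    FactorsThroughLcm i j (ofWord a) (ofWord b)

namespace HeadsFactor

variable {s t r s' t' : FreeMonoid ℕ}

lemma refl (s : FreeMonoid ℕ) : HeadsFactor s s := by
  cases s using FreeMonoid.casesOn with
  | one => exact Or.inl ⟨rfl, rfl⟩
  | of_mul i a => exact Or.inr ⟨i, a, i, a, rfl, rfl, .refl _ _⟩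

lemma symm (h : HeadsFactor s t) : HeadsFactor t s := by
  rcases h with ⟨hs, ht⟩ | ⟨i, a, j, b, hs, ht, h⟩
  · exact Or.inl ⟨ht, hs⟩
  · exact Or.inr ⟨j, b, i, a, ht, hs, h.symm⟩

lemma of_rel (h : BraidMonoidRel s t) : HeadsFactor s t := by
  cases h with
  | @comm i j h =>
    exact Or.inr ⟨i, .of j, j, .of i, rfl, rfl, by simpa only [mul_one] using .of_far (.inl h) 1⟩
  | braid i =>
    exact Or.inr ⟨i, .of (i + 1) * .of i, i + 1, .of i * .of (i + 1), rfl, rfl,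
      by simpa only [mul_one] using .of_adj (.inl rfl) 1⟩

lemma mul (h : HeadsFactor s t) (h' : HeadsFactor s' t') (hst : ofWord s' = ofWord t') :
    HeadsFactor (s * s') (t * t') := by
  rcases h with ⟨rfl, rfl⟩ | ⟨i, a, j, b, rfl, rfl, h⟩
  · simpa only [one_mul] using h'
  · refine Or.inr ⟨i, a * s', j, b * t', mul_assoc _ _ _, mul_assoc _ _ _, ?_⟩
    rw [map_mul, map_mul, hst]
    exact h.mul_right _

lemma trans {n : ℕ} (H : GarsideBelow n) (hs : len (ofWord s) ≤ n + 1)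
    (hr : len (ofWord r) ≤ n + 1) (hst : HeadsFactor s t) (htr : HeadsFactor t r) :
    HeadsFactor s r := by
  rcases hst with ⟨rfl, rfl⟩ | ⟨i, a, k, c, rfl, rfl, hac⟩
  · exact htr
  rcases htr with ⟨hc, _⟩ | ⟨k', c', j, b, hc, rfl, hcb⟩
  · cases hc
  obtain ⟨rfl, rfl⟩ := List.cons.inj hc
  rw [ofWord_of_mul, len_mul, len_gen] at hs hr
  exact Or.inr ⟨i, a, j, b, rfl, rfl, H.factors_trans (by omega) (by omega) hac hcb⟩

end HeadsFactor

lemma GarsideBelow.headsFactor {n : ℕ} (H : GarsideBelow n) {s t : FreeMonoid ℕ}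
    (h : ConGen.Rel BraidMonoidRel s t) (hs : len (ofWord s) ≤ n + 1) : HeadsFactor s t := by
  have ofWord_eq {s t : FreeMonoid ℕ} (h : ConGen.Rel BraidMonoidRel s t) :
      ofWord s = ofWord t := PresentedMonoid.mk_eq_mk_iff.2 h
  induction h with
  | of s t h => exact .of_rel h
  | refl s => exact .refl s
  | symm h ih => exact (ih (by rwa [ofWord_eq h])).symm
  | trans h h' ih ih' =>
    rw [ofWord_eq h] at hs ih
    exact .trans H (by rwa [ofWord_eq h]) (by rwa [← ofWord_eq h']) (ih hs) (ih' hs)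
  | mul _ h ih ih' =>
    rw [map_mul, len_mul] at hs
    exact (ih (by omega)).mul (ih' (by omega)) (ofWord_eq h)

lemma garsideBelow (n : ℕ) : GarsideBelow n := by
  induction n with
  | zero => exact fun _ _ _ _ h => absurd h (Nat.not_lt_zero _)
  | succ n ih =>
    intro i j a b ha h
    obtain ⟨s, rfl⟩ := PresentedMonoid.surjective_mk a
    obtain ⟨t, rfl⟩ := PresentedMonoid.surjective_mk b
    have hst : ConGen.Rel BraidMonoidRel (.of i * s) (.of j * t) :=
      PresentedMonoid.mk_eq_mk_iff.1 h
    have hlen : len (ofWord (.of i * s)) ≤ n + 1 := by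
      rw [ofWord_of_mul, len_mul, len_gen, add_comm]
      exact ha
    rcases ih.headsFactor hst hlen with ⟨h, _⟩ | ⟨i', s', j', t', hs, ht, hfac⟩
    · cases h
    · obtain ⟨rfl, rfl⟩ := List.cons.inj hs
      obtain ⟨rfl, rfl⟩ := List.cons.inj ht
      exact hfac

theorem factorsThroughLcm_of_gen_mul_eq {i j : ℕ} {x y : BraidMonoid}
    (h : gen i * x = gen j * y) : FactorsThroughLcm i j x y :=
  garsideBelow _ (Nat.lt_succ_self (len x)) h

instance : IsLeftCancelMul BraidMonoid where
  mul_left_cancel c a b h := by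
    replace h : c * a = c * b := h
    induction c using gen_induction with
    | one => simpa only [one_mul] using h
    | gen_mul i x ih =>
      rw [mul_assoc, mul_assoc] at h
      exact ih (factorsThroughLcm_of_gen_mul_eq h).eq

lemma isLcm_gen (i j : ℕ) : IsLcm (gen i) (gen j) (gen i * compl i j) := fun y => by
  constructor
  · exact fun h => ⟨(Dvd.intro _ rfl).trans h, (Dvd.intro _ (gen_mul_compl i j).symm).trans h⟩
  · rintro ⟨⟨a, rfl⟩, ⟨b, hb⟩⟩
    obtain ⟨z, rfl, -⟩ := factorsThroughLcm_of_gen_mul_eq hb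
    exact ⟨z, (mul_assoc _ _ _).symm⟩

/-! ### The shift and the full twist -/

/-- The endomorphism of the positive braids that corresponds to `sh`. -/
def shift : BraidMonoid →* BraidMonoid :=
  lift (fun i => gen (i + 1)) (fun _ _ h => commute_gen (by omega))
    (fun _ => gen_braid (by omega))

@[simp] lemma shift_gen (i : ℕ) : shift (gen i) = gen (i + 1) := lift_gen _ _ _ i

/-- The positive braid `σ 0 * σ 1 * ⋯ * σ (n - 1)` on `n + 1` strands. -/
def delta : ℕ → BraidMonoid
  | 0 => 1
  | n + 1 => delta n * gen n

lemma delta_succ (n : ℕ) : delta (n + 1) = delta n * gen n := rfl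

lemma delta_succ' (n : ℕ) : delta (n + 1) = gen 0 * shift (delta n) := by
  induction n with
  | zero => rw [delta_succ, delta, map_one, one_mul, mul_one]
  | succ n ih => rw [delta_succ (n + 1), ih, mul_assoc, ← shift_gen, ← map_mul, ← delta_succ, ih]

lemma commute_delta_gen {n i : ℕ} (h : n < i) : Commute (delta n) (gen i) := by
  induction n with
  | zero => exact Commute.one_left _
  | succ n ih => exact (ih (by omega)).mul_left (commute_gen (by omega))

lemma semiconjBy_delta_gen {n i : ℕ} (h : i + 1 < n) :
    SemiconjBy (delta n) (gen i) (gen (i + 1)) := by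
  induction n with
  | zero => omega
  | succ n ih =>
    rcases (by omega : i + 1 < n ∨ n = i + 1) with hn | rfl
    · exact (ih hn).mul_left (commute_gen (by omega))
    · calc delta i * gen i * gen (i + 1) * gen i
          = delta i * (gen i * gen (i + 1) * gen i) := by simp only [mul_assoc]
        _ = delta i * gen (i + 1) * gen i * gen (i + 1) := by
          rw [gen_braid (by omega)]; simp only [mul_assoc]
        _ = gen (i + 1) * (delta i * gen i * gen (i + 1)) := by
          rw [(commute_delta_gen (by omega)).eq]; simp only [mul_assoc]

lemma semiconjBy_delta_delta {m n : ℕ} (h : m < n) :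
    SemiconjBy (delta n) (delta m) (shift (delta m)) := by
  induction m with
  | zero => rw [delta, map_one]; exact SemiconjBy.one_right _
  | succ m ih =>
    rw [delta_succ, map_mul, shift_gen]
    exact (ih (by omega)).mul_right (semiconjBy_delta_gen h)

lemma eventually_semiconjBy_delta_shift (x : BraidMonoid) :
    ∀ᶠ n in atTop, SemiconjBy (delta n) x (shift x) := by
  induction x using gen_induction with
  | one => exact .of_forall fun n => by rw [map_one]; exact SemiconjBy.one_right _
  | gen_mul i x ih =>
    filter_upwards [ih, eventually_gt_atTop (i + 1)] with n hx hi
    rw [map_mul, shift_gen]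
    exact (semiconjBy_delta_gen hi).mul_right hx

lemma shift_injective : Function.Injective shift := fun x y h => by
  obtain ⟨n, hx, hy⟩ :=
    ((eventually_semiconjBy_delta_shift x).and (eventually_semiconjBy_delta_shift y)).exists
  rw [SemiconjBy, h, ← hy.eq] at hx
  exact mul_left_cancel hx

lemma semiconjBy_delta_sq (n : ℕ) : SemiconjBy (delta (n + 1) ^ 2) (gen n) (gen 0) := by
  have hright : delta (n + 1) ^ 2 = delta (n + 1) * delta n * gen n := by
    rw [sq, mul_assoc, ← delta_succ]
  have hleft : delta (n + 1) ^ 2 = gen 0 * (delta (n + 1) * delta n) := by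
    rw [(semiconjBy_delta_delta n.lt_succ_self).eq, ← mul_assoc, ← delta_succ', sq]
  calc delta (n + 1) ^ 2 * gen n = gen 0 * (delta (n + 1) * delta n * gen n) := by
        rw [hleft, mul_assoc]
    _ = gen 0 * delta (n + 1) ^ 2 := by rw [hright]

lemma semiconjBy_delta_pow {n i k : ℕ} (h : i + k < n) :
    SemiconjBy (delta n ^ k) (gen i) (gen (i + k)) := by
  induction k with
  | zero => rw [pow_zero]; exact SemiconjBy.one_left _
  | succ k ih =>
    rw [pow_succ']
    exact (semiconjBy_delta_gen h).mul_left (ih (by omega))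

/-- The full twist `Δ²` on `n + 1` strands, written as a power of `delta n`. -/
def fullTwist (n : ℕ) : BraidMonoid := delta n ^ (n + 1)

/- Conjugation by `delta n` cycles `σ 0, …, σ (n - 1)`, passing from the last to the first in two
steps. -/
lemma commute_gen_fullTwist {n i : ℕ} (h : i < n) : Commute (gen i) (fullTwist n) := by
  obtain ⟨k, rfl⟩ := Nat.exists_eq_add_of_lt h
  have hto : SemiconjBy (delta (i + k + 1) ^ k) (gen i) (gen (i + k)) :=
    semiconjBy_delta_pow (by omega)
  have hfrom : SemiconjBy (delta (i + k + 1) ^ i) (gen 0) (gen i) := by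
    simpa only [zero_add] using
      semiconjBy_delta_pow (n := i + k + 1) (i := 0) (k := i) (by omega)
  have hcycle := hfrom.mul_left ((semiconjBy_delta_sq (i + k)).mul_left hto)
  rw [← pow_add, ← pow_add] at hcycle
  rw [fullTwist, show i + k + 1 + 1 = i + (2 + k) by omega]
  exact hcycle.eq.symm

lemma gen_dvd_fullTwist {n i : ℕ} (h : i < n) : gen i ∣ fullTwist n := by
  have hgen : gen 0 ∣ delta n ^ (n + 1 - i) := by
    obtain ⟨m, rfl⟩ := Nat.exists_eq_succ_of_ne_zero (Nat.ne_zero_of_lt h)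
    exact ((Dvd.intro _ (delta_succ' m).symm).trans (dvd_pow_self _ (by omega)))
  have hslide : SemiconjBy (delta n ^ i) (gen 0) (gen i) := by
    simpa only [zero_add] using semiconjBy_delta_pow (n := n) (i := 0) (k := i) (by omega)
  have hdvd : delta n ^ i * gen 0 ∣ fullTwist n := by
    rw [fullTwist, ← Nat.add_sub_of_le (by omega : i ≤ n + 1), pow_add]
    exact mul_dvd_mul_left _ hgen
  exact (Dvd.intro _ hslide.eq.symm).trans hdvd

lemma eventually_commute_and_dvd_fullTwist (x : BraidMonoid) :
    ∀ᶠ n in atTop, Commute x (fullTwist n) ∧ ∃ l, x ∣ fullTwist n ^ l := by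
  induction x using gen_induction with
  | one => exact .of_forall fun n => ⟨Commute.one_left _, 0, one_dvd _⟩
  | gen_mul i x ih =>
    filter_upwards [ih, eventually_gt_atTop i] with n ⟨hx, l, hxl⟩ hin
    have hi : Commute (gen i) (fullTwist n) := commute_gen_fullTwist hin
    exact ⟨hi.mul_left hx, l + 1, mul_dvd_pow_succ hi (gen_dvd_fullTwist hin) hxl⟩

lemma exists_commute_and_dvd (x y : BraidMonoid) :
    ∃ z, (Commute x z ∧ x ∣ z) ∧ Commute y z ∧ y ∣ z := by
  obtain ⟨n, ⟨hx, l, hxl⟩, hy, l', hyl⟩ := ((eventually_commute_and_dvd_fullTwist x).and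
    (eventually_commute_and_dvd_fullTwist y)).exists
  exact ⟨fullTwist n ^ (l + l'), ⟨hx.pow_right _, hxl.trans (pow_dvd_pow _ (by omega))⟩,
    hy.pow_right _, hyl.trans (pow_dvd_pow _ (by omega))⟩

lemma exists_mul_eq_mul (x y : BraidMonoid) : ∃ p q, p * x = q * y := by
  have exists_left_mul {x z : BraidMonoid} (hcomm : Commute x z) (hdvd : x ∣ z) :
      ∃ p, p * x = z := by
    obtain ⟨p, rfl⟩ := hdvd
    exact ⟨p, mul_left_cancel (a := x) (by rw [← mul_assoc, ← hcomm.eq])⟩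
  obtain ⟨z, ⟨hx, hxz⟩, hy, hyz⟩ := exists_commute_and_dvd x y
  obtain ⟨p, hp⟩ := exists_left_mul hx hxz
  obtain ⟨q, hq⟩ := exists_left_mul hy hyz
  exact ⟨p, q, hp.trans hq.symm⟩

instance : IsCancelMul BraidMonoid where
  mul_right_cancel c a b h := by
    replace h : a * c = b * c := h
    obtain ⟨n, ⟨ha, -⟩, ⟨hb, -⟩, -, l, d, hd⟩ := ((eventually_commute_and_dvd_fullTwist a).and
      ((eventually_commute_and_dvd_fullTwist b).and
        (eventually_commute_and_dvd_fullTwist c))).exists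
    refine mul_left_cancel (a := fullTwist n ^ l) ?_
    rw [← (ha.pow_right l).eq, ← (hb.pow_right l).eq, hd, ← mul_assoc, h, mul_assoc]

lemma exists_isLcm (u v : BraidMonoid) : ∃ m, IsLcm u v m := by
  obtain ⟨x, ⟨-, hu⟩, -, hv⟩ := exists_commute_and_dvd u v
  refine exists_isLcm_of_generators closure_range_gen len ?_ ?_ hu hv
  · rintro _ ⟨i, rfl⟩ x
    rw [len_mul, len_gen]
    omega
  · rintro _ ⟨i, rfl⟩ _ ⟨j, rfl⟩ _ _ _
    exact ⟨_, isLcm_gen i j⟩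

/-- The indicator of the positive braids in which `σ 0` does not occur. Taking values in the
multiplicative monoid `ℕ` makes it a homomorphism for which a product is `1` only if both factors
are. -/
def avoidsZero : BraidMonoid →* ℕ :=
  lift (fun i => if i = 0 then 0 else 1) (fun _ _ _ => mul_comm _ _) (fun i => by simp)

lemma avoidsZero_gen (i : ℕ) : avoidsZero (gen i) = if i = 0 then 0 else 1 :=
  lift_gen _ _ _ i

lemma mem_mrange_shift_iff {x : BraidMonoid} : x ∈ MonoidHom.mrange shift ↔ avoidsZero x = 1 := by
  constructor
  · rintro ⟨y, rfl⟩
    induction y using gen_induction with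
    | one => rw [map_one, map_one]
    | gen_mul i y ih =>
      rw [map_mul, map_mul, ih, shift_gen, avoidsZero_gen, if_neg i.succ_ne_zero]
  · intro h
    induction x using gen_induction with
    | one => exact one_mem _
    | gen_mul i x ih =>
      rw [map_mul, mul_eq_one, avoidsZero_gen] at h
      obtain ⟨i, rfl⟩ := Nat.exists_eq_succ_of_ne_zero (fun hi : i = 0 => by simp [hi] at h)
      exact mul_mem ⟨gen i, shift_gen i⟩ (ih h.2)

lemma mul_mem_mrange_shift_iff {x y : BraidMonoid} : x * y ∈ MonoidHom.mrange shift ↔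
    x ∈ MonoidHom.mrange shift ∧ y ∈ MonoidHom.mrange shift := by
  simp only [mem_mrange_shift_iff, map_mul, mul_eq_one]

lemma gen_zero_notMem_mrange_shift : gen 0 ∉ MonoidHom.mrange shift := by
  rw [mem_mrange_shift_iff, avoidsZero_gen, if_pos rfl]
  exact zero_ne_one

lemma shift_dvd_shift_iff {x y : BraidMonoid} : shift x ∣ shift y ↔ x ∣ y := by
  refine ⟨fun ⟨z, hz⟩ => ?_, map_dvd shift⟩
  have hmem : shift x * z ∈ MonoidHom.mrange shift := ⟨y, hz⟩
  obtain ⟨z, rfl⟩ := (mul_mem_mrange_shift_iff.1 hmem).2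
  exact ⟨z, shift_injective (by rw [hz, map_mul])⟩

lemma isLcm_shift {u v m : BraidMonoid} (h : IsLcm u v m) :
    IsLcm (shift u) (shift v) (shift m) := by
  obtain ⟨l, hl⟩ := exists_isLcm (shift u) (shift v)
  have hlm : l ∣ shift m := hl.dvd (map_dvd shift h.dvd_left) (map_dvd shift h.dvd_right)
  obtain ⟨l, rfl⟩ : l ∈ MonoidHom.mrange shift := by
    obtain ⟨c, hc⟩ := hlm
    have hmem : l * c ∈ MonoidHom.mrange shift := ⟨m, hc⟩
    exact (mul_mem_mrange_shift_iff.1 hmem).1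
  have hml : shift m ∣ shift l := map_dvd shift <|
    h.dvd (shift_dvd_shift_iff.1 hl.dvd_left) (shift_dvd_shift_iff.1 hl.dvd_right)
  exact fun y => ⟨fun hy => (hl y).1 (hlm.trans hy), fun hy => hml.trans ((hl y).2 hy)⟩

/- If `shift a` starts with `σ 1`, then the equality passes through the least common multiple
`σ 0 * σ 1 * σ 0` of `σ 0` and `σ 1`, which puts a letter `σ 0` into `shift a`. -/
lemma mem_mrange_shift_of_gen_zero_mul_shift_eq {a w : BraidMonoid}
    (h : gen 0 * shift a = shift a * w) : a ∈ MonoidHom.mrange shift := by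
  induction a using gen_induction with
  | one => exact one_mem _
  | gen_mul i a ih =>
    rw [map_mul, shift_gen, mul_assoc (gen (i + 1))] at h
    have hfac := factorsThroughLcm_of_gen_mul_eq h
    cases i with
    | zero =>
      obtain ⟨z, hz, -⟩ := hfac.exists_of_adj (.inl rfl)
      have hmem : gen 0 * z ∈ MonoidHom.mrange shift := ⟨a, mul_left_cancel hz⟩
      exact absurd (mul_mem_mrange_shift_iff.1 hmem).1 gen_zero_notMem_mrange_shift
    | succ i =>
      obtain ⟨z, hz, hz'⟩ := hfac.exists_of_far (.inl (by omega))
      obtain rfl : shift a = z := mul_left_cancel hz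
      exact mul_mem ⟨gen i, shift_gen i⟩ (ih hz'.symm)

end BraidMonoid

/-! ### The braid group as a group of fractions -/

open BraidMonoid

lemma commute_σ {i j : ℕ} (h : i + 2 ≤ j) : Commute (σ i) (σ j) :=
  commutatorElement_eq_one_iff_commute.1 (mk_rel_eq_one (.inl ⟨i, j, h, rfl⟩))

lemma σ_braid (i : ℕ) : σ i * σ (i + 1) * σ i = σ (i + 1) * σ i * σ (i + 1) :=
  mul_inv_eq_one.1 (mk_rel_eq_one (.inr ⟨i, rfl⟩))

lemma closure_range_σ : Subgroup.closure (Set.range σ) = ⊤ :=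
  PresentedGroup.closure_range_of braidRels

/-- The canonical homomorphism from positive braids to braids. -/
def toBinf : BraidMonoid →* Binf := lift σ (fun _ _ h => (commute_σ h).eq) σ_braid

@[simp] lemma toBinf_gen (i : ℕ) : toBinf (gen i) = σ i := lift_gen _ _ _ i

lemma toBinf_shift (x : BraidMonoid) : toBinf (shift x) = sh (toBinf x) := by
  induction x using gen_induction with
  | one => simp only [map_one]
  | gen_mul i x ih => simp only [map_mul, ih, shift_gen, toBinf_gen, sh_σ]

lemma toBinf_injective : Function.Injective toBinf := by
  obtain ⟨G, _, f, hf⟩ := exists_injective_hom_to_group exists_mul_eq_mul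
  have hrels : ∀ r ∈ braidRels, FreeGroup.lift (fun i => f (gen i)) r = 1 := by
    rintro _ (⟨i, j, h, rfl⟩ | ⟨i, rfl⟩)
    · simp only [map_mul, map_inv, FreeGroup.lift_apply_of]
      exact commutatorElement_eq_one_iff_commute.2 ((commute_gen (.inl h)).map f)
    · simp only [map_mul, map_inv, FreeGroup.lift_apply_of, mul_inv_eq_one]
      simp only [← map_mul, gen_braid (i := i) (.inl rfl)]
  have hfactor (x : BraidMonoid) : PresentedGroup.toGroup hrels (toBinf x) = f x := by
    induction x using gen_induction with
    | one => simp only [map_one]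
    | gen_mul i x ih =>
      rw [map_mul, map_mul, map_mul, ih, toBinf_gen]
      exact congrArg (· * f x) (PresentedGroup.toGroup.of hrels)
  exact fun x y h => hf (by rw [← hfactor, h, hfactor])

lemma exists_toBinf_mul_eq_toBinf (e : Binf) : ∃ u v, toBinf u * e = toBinf v := by
  refine exists_map_mul_eq_map exists_mul_eq_mul (top_unique ?_) e
  rw [← closure_range_σ]
  exact Subgroup.closure_mono (Set.range_subset_iff.2 fun i => ⟨gen i, toBinf_gen i⟩)

lemma commute_sh_sh_σ_zero (b : Binf) : Commute (sh (sh b)) (σ 0) := by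
  have hb : b ∈ Subgroup.closure (Set.range σ) := closure_range_σ ▸ Subgroup.mem_top b
  induction hb using Subgroup.closure_induction with
  | mem _ hx =>
    obtain ⟨i, rfl⟩ := hx
    rw [sh_σ, sh_σ]
    exact (commute_σ (by omega)).symm
  | one => simp only [map_one, Commute.one_left]
  | mul _ _ _ _ hx hy => simpa only [map_mul] using hx.mul_left hy
  | inv _ _ hx => simpa only [map_inv] using hx.inv_left

/- Write `e = a / b` in lowest terms. As `sh e` commutes with `σ 0`, also
`(σ 0 * sh a) / (σ 0 * sh b) = sh e`, so this fraction comes from `sh a / sh b`, which is again in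
lowest terms, by right multiplication with some `w`. -/
lemma mem_range_sh_of_commute {e : Binf} (h : Commute (sh e) (σ 0)) : e ∈ sh.range := by
  obtain ⟨u, v, huv⟩ := exists_toBinf_mul_eq_toBinf e
  obtain ⟨m, hm⟩ := exists_isLcm u v
  obtain ⟨a, rfl⟩ := hm.dvd_left
  obtain ⟨b, hab⟩ := hm.dvd_right
  have he : e * toBinf b = toBinf a := by
    refine mul_left_cancel (a := toBinf u) ?_
    rw [← mul_assoc, huv, ← map_mul, ← map_mul, hab]
  have hslide : shift u * (gen 0 * shift a) = shift v * (gen 0 * shift b) := by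
    apply toBinf_injective
    simp only [map_mul, toBinf_shift, toBinf_gen]
    rw [← huv, ← he, map_mul, map_mul, ← mul_assoc (σ 0), ← h.eq]
    simp only [mul_assoc]
  have hlcm : IsLcm (shift u) (shift v) (shift u * shift a) := map_mul shift u a ▸ isLcm_shift hm
  obtain ⟨w, hwa, hwb⟩ :=
    hlcm.exists_eq_mul (by rw [← map_mul, hab, map_mul]) hslide
  obtain ⟨a, rfl⟩ := mem_mrange_shift_of_gen_zero_mul_shift_eq hwa
  obtain ⟨b, rfl⟩ := mem_mrange_shift_of_gen_zero_mul_shift_eq hwb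
  refine ⟨toBinf a * (toBinf b)⁻¹, ?_⟩
  rw [map_mul, map_inv, ← toBinf_shift, ← toBinf_shift, ← he, mul_inv_cancel_right]

theorem commute_sh_σ_zero_iff {e : Binf} : Commute (sh e) (σ 0) ↔ e ∈ sh.range := by
  refine ⟨mem_range_sh_of_commute, ?_⟩
  rintro ⟨d, rfl⟩
  exact commute_sh_sh_σ_zero d

lemma exists_sc_eq_iff {β ε : Binf} :
    (∃ β', sc β β' = β * ε * σ 0 * (sh β)⁻¹) ↔ ε ∈ sh.range := by
  simp only [sc, mul_left_inj, mul_right_inj, MonoidHom.mem_range]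

lemma sc_sc_eq_sc_iff {β ε : Binf} :
    sc β (β * ε * σ 0 * (sh β)⁻¹) = sc (sc β β) (β * ε * σ 0 * (sh β)⁻¹) ↔
      Commute (sh ε) (σ 0) := by
  have hcomm : (sh (sh β))⁻¹ * σ 0 = σ 0 * (sh (sh β))⁻¹ := (commute_sh_sh_σ_zero β).inv_left.eq
  have hbraid : σ 1 * σ 0 * (σ 1)⁻¹ = (σ 0)⁻¹ * (σ 1 * σ 0) := by
    rw [mul_inv_eq_iff_eq_mul, mul_assoc, eq_inv_mul_iff_mul_eq, ← mul_assoc]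
    exact σ_braid 0
  have hleft : sc β (β * ε * σ 0 * (sh β)⁻¹) =
      β * sh β * (sh ε * (σ 1 * σ 0)) * (sh (sh β))⁻¹ * (sh β)⁻¹ := by
    calc sc β (β * ε * σ 0 * (sh β)⁻¹)
        = β * sh β * sh ε * σ 1 * ((sh (sh β))⁻¹ * σ 0) * (sh β)⁻¹ := by
          simp only [sc, map_mul, map_inv, sh_σ, mul_assoc]
      _ = _ := by rw [hcomm]; simp only [mul_assoc]
  have hright : sc (sc β β) (β * ε * σ 0 * (sh β)⁻¹) =
      β * sh β * (σ 0 * sh ε * (σ 1 * σ 0 * (σ 1)⁻¹)) * (sh (sh β))⁻¹ * (sh β)⁻¹ := by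
    calc sc (sc β β) (β * ε * σ 0 * (sh β)⁻¹)
        = β * sh β * σ 0 * sh ε * σ 1 * ((sh (sh β))⁻¹ * σ 0) *
            sh (sh β) * (σ 1)⁻¹ * (sh (sh β))⁻¹ * (sh β)⁻¹ := by
          simp only [sc, map_mul, map_inv, sh_σ, mul_assoc, mul_inv_rev, inv_inv, zero_add,
            inv_mul_cancel_left]
      _ = _ := by rw [hcomm]; simp only [mul_assoc, inv_mul_cancel_left]
  rw [hleft, hright, hbraid, mul_left_inj, mul_left_inj, mul_right_inj,
    ← mul_assoc (σ 0 * sh ε), mul_left_inj, eq_mul_inv_iff_mul_eq]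
  rfl

/-- `γ` lies in the image of the left translation `y ↦ β ▷ y`
iff `β ▷ γ = (β ▷ β) ▷ γ`. -/
theorem mem_image_left_translation_iff (β γ : Binf) :
    (∃ β' : Binf, sc β β' = γ) ↔ sc β γ = sc (sc β β) γ := by
  obtain ⟨ε, rfl⟩ : ∃ ε, γ = β * ε * σ 0 * (sh β)⁻¹ := ⟨β⁻¹ * γ * sh β * (σ 0)⁻¹, by group⟩
  rw [exists_sc_eq_iff, sc_sc_eq_sc_iff, commute_sh_σ_zero_iff]
end

section
/- Division in a free monogenerated left-shelf has no cycle: let (S, ▷) be a left-shelf generated by a single element g, and suppose S is free based on g, meaning that for every left-shelf (S', ▷') and every g' ∈ S' there exists a map φ : S → S' with φ(g) = g' and φ(a ▷ b) = φ(a) ▷' φ(b) for all a, b ∈ S. Then there is no a ∈ S with a ⊏* a; that is, ⊏* is irreflexive on S. -/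
/-- The division relation of a left-shelf: `a ⊏ b` iff `a ▷ x = b` for some `x`. -/
def shelfDiv {S : Type*} [Shelf S] (a b : S) : Prop := ∃ x, Shelf.act a x = b

universe v

/-!
A function `d` into a preorder with `d (a ▷ b) < d a` forbids division cycles, so by freeness it is
enough to find one shelf carrying such a function.

If a group carries an endomorphism `sh` and an element `σ` that behave like the shift and the first
generator of the braid group `B_∞`, then `x ▷ y = x * sh y * σ * (sh x)⁻¹` is self-distributive
(Dehornoy). A bijective solution `r` of the set-theoretic Yang–Baxter equation on `P` gives such
data on the permutations of the sequences in `P`: `sh φ` fixes the head and applies `φ` to the tail,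
and `σ` applies `r` to the first two entries. If `r` moreover raises the height of the first entry,
then, as `sh` never touches the head, the height of the head of `x⁻¹ s` is a function `d` as above,
for any sequence `s`.

Such an `r` is obtained from Dynnikov's action of braids on integral laminations on reading its
max-plus formulas as subtraction-free rational functions of positive variables.
-/

open Equiv

theorem not_transGen_shelfDiv_of_act_lt {S α : Type*} [Shelf S] [Preorder α] {d : S → α}
    (hd : ∀ a b, d (Shelf.act a b) < d a) (a : S) : ¬ Relation.TransGen shelfDiv a a := by
  intro hcycle
  have hdiv : ∀ b c, shelfDiv b c → d b > d c := by
    rintro b _ ⟨x, rfl⟩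
    exact hd b x
  have hgt : Relation.TransGen (· > ·) (d a) (d a) := hcycle.lift d hdiv
  rw [Relation.transGen_eq_self] at hgt
  exact lt_irrefl _ hgt

instance {S : Type*} [Shelf S] : Shelf (ULift.{v} S) where
  act x y := ⟨Shelf.act x.down y.down⟩
  self_distrib := congrArg ULift.up Shelf.self_distrib

/-- A group endomorphism `shift` and an element `gen` satisfying the relations between the shift
endomorphism and the first Artin generator of the braid group on infinitely many strands. -/
structure BraidShift (G : Type*) [Group G] where
  /-- The analogue of the endomorphism `σᵢ ↦ σᵢ₊₁`. -/
  shift : G →* G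
  /-- The analogue of the generator `σ₁`. -/
  gen : G
  gen_commute : ∀ x, Commute gen (shift (shift x))
  braid : gen * shift gen * gen = shift gen * gen * shift gen

namespace BraidShift

variable {G : Type*} [Group G] (B : BraidShift G)

/-- Dehornoy's self-distributive operation attached to a shift and a generator. -/
def bracket (x y : G) : G := x * B.shift y * B.gen * (B.shift x)⁻¹

theorem bracket_self_distrib (x y z : G) :
    B.bracket x (B.bracket y z) = B.bracket (B.bracket x y) (B.bracket x z) := by
  have hx : (B.shift (B.shift x))⁻¹ * B.gen * B.shift (B.shift x) = B.gen :=
    (B.gen_commute x).symm.inv_mul_cancel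
  have hy : (B.shift (B.shift y))⁻¹ * B.gen = B.gen * (B.shift (B.shift y))⁻¹ :=
    (B.gen_commute y).inv_right.eq.symm
  have hz : B.gen * B.shift (B.shift z) = B.shift (B.shift z) * B.gen := B.gen_commute z
  have hbraid : B.gen * B.shift B.gen * B.gen * (B.shift B.gen)⁻¹ = B.shift B.gen * B.gen := by
    rw [B.braid, mul_inv_cancel_right]
  simp only [bracket, map_mul, map_inv, mul_inv_rev, inv_inv]
  calc
    _ = x * B.shift y * B.shift (B.shift z) * B.shift B.gen *
          ((B.shift (B.shift y))⁻¹ * B.gen) * (B.shift x)⁻¹ := by group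
    _ = x * B.shift y * B.shift (B.shift z) * (B.shift B.gen * B.gen) *
          (B.shift (B.shift y))⁻¹ * (B.shift x)⁻¹ := by rw [hy]; group
    _ = x * B.shift y * (B.shift (B.shift z) * B.gen) * B.shift B.gen * B.gen *
          (B.shift B.gen)⁻¹ * (B.shift (B.shift y))⁻¹ * (B.shift x)⁻¹ := by rw [← hbraid]; group
    _ = x * B.shift y * (B.gen * B.shift (B.shift z)) * B.shift B.gen *
          ((B.shift (B.shift x))⁻¹ * B.gen * B.shift (B.shift x)) *
          (B.shift B.gen)⁻¹ * (B.shift (B.shift y))⁻¹ * (B.shift x)⁻¹ := by rw [hx, hz]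
    _ = _ := by group

/-- The shelf on a group whose operation is `BraidShift.bracket`. -/
abbrev shelf : Shelf G where
  act := B.bracket
  self_distrib := B.bracket_self_distrib _ _ _

end BraidShift

section YangBaxter

open scoped Stream'

variable {P : Type*}

/-- `r` solves the set-theoretic Yang–Baxter equation in its braid form `r₁₂ r₂₃ r₁₂ = r₂₃ r₁₂ r₂₃`,
the three copies of `P` being bracketed as `P × (P × P)`. -/
def IsYangBaxter (r : Perm (P × P)) : Prop :=
  let r₁₂ : Perm (P × P × P) := (prodAssoc P P P).permCongr (r.prodCongr (.refl P))
  let r₂₃ : Perm (P × P × P) := (Equiv.refl P).prodCongr r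
  r₁₂ * r₂₃ * r₁₂ = r₂₃ * r₁₂ * r₂₃

/-- The permutation of sequences that keeps the head and applies `φ` to the tail. -/
def permTail : Perm (Stream' P) →* Perm (Stream' P) where
  toFun φ :=
    { toFun s := s.head :: φ s.tail
      invFun s := s.head :: φ.symm s.tail
      left_inv s := by simp
      right_inv s := by simp }
  map_one' := by ext1 s; simp
  map_mul' φ ψ := by ext1 s; simp

@[simp]
theorem permTail_cons (φ : Perm (Stream' P)) (a : P) (s : Stream' P) :
    permTail φ (a :: s) = a :: φ s := by
  simp [permTail]

@[simp]
theorem head_permTail (φ : Perm (Stream' P)) (s : Stream' P) : (permTail φ s).head = s.head :=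
  rfl

/-- The permutation of sequences that applies `r` to the pair of the first two entries. -/
def permHeads (r : Perm (P × P)) : Perm (Stream' P) where
  toFun s := (r (s.head, s.tail.head)).1 :: (r (s.head, s.tail.head)).2 :: s.tail.tail
  invFun s := (r.symm (s.head, s.tail.head)).1 :: (r.symm (s.head, s.tail.head)).2 :: s.tail.tail
  left_inv s := by
    simp only [Stream'.head_cons, Stream'.tail_cons, Prod.mk.eta, symm_apply_apply, Stream'.eta]
  right_inv s := by
    simp only [Stream'.head_cons, Stream'.tail_cons, Prod.mk.eta, apply_symm_apply, Stream'.eta]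

@[simp]
theorem permHeads_cons_cons (r : Perm (P × P)) (a b : P) (s : Stream' P) :
    permHeads r (a :: b :: s) = (r (a, b)).1 :: (r (a, b)).2 :: s := by
  simp [permHeads]

theorem permHeads_commute_permTail_permTail (r : Perm (P × P)) (φ : Perm (Stream' P)) :
    Commute (permHeads r) (permTail (permTail φ)) := by
  ext1 s
  rw [← s.eta, ← s.tail.eta]
  simp

theorem IsYangBaxter.braid_permHeads {r : Perm (P × P)} (hr : IsYangBaxter r) :
    permHeads r * permTail (permHeads r) * permHeads r =
      permTail (permHeads r) * permHeads r * permTail (permHeads r) := by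
  ext1 s
  have h := DFunLike.congr_fun hr (s.head, s.tail.head, s.tail.tail.head)
  rw [← s.eta, ← s.tail.eta, ← s.tail.tail.eta]
  simp_all [permCongr_apply, Prod.ext_iff]

/-- The shift and generator on permutations of sequences given by a solution of the Yang–Baxter
equation. -/
def IsYangBaxter.braidShift {r : Perm (P × P)} (hr : IsYangBaxter r) :
    BraidShift (Perm (Stream' P)) where
  shift := permTail
  gen := permHeads r
  gen_commute := permHeads_commute_permTail_permTail r
  braid := hr.braid_permHeads

theorem IsYangBaxter.height_head_inv_bracket_lt {r : Perm (P × P)} (hr : IsYangBaxter r)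
    {α : Type*} [LT α] {height : P → α}
    (hheight : ∀ a b, height a < height (r (a, b)).1)
    (x y : Perm (Stream' P)) (s : Stream' P) :
    height ((hr.braidShift.bracket x y)⁻¹ s).head < height (x⁻¹ s).head := by
  have hinv : (hr.braidShift.bracket x y)⁻¹ s =
      permTail x ((permHeads r)⁻¹ (permTail y⁻¹ (x⁻¹ s))) := by
    simp [BraidShift.bracket, IsYangBaxter.braidShift]
  set t := (permHeads r)⁻¹ (permTail y⁻¹ (x⁻¹ s)) with ht
  have hhead : (permHeads r t).head = (x⁻¹ s).head := by
    rw [ht, ← Perm.mul_apply, mul_inv_cancel, Perm.one_apply, head_permTail]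
  rw [hinv, head_permTail, ← hhead]
  exact hheight t.head t.tail.head

end YangBaxter

/-- A pair of positive coordinates attached to one strand: the multiplicative counterpart of the
pair `(aᵢ, bᵢ)` of Dynnikov coordinates attached to a puncture. -/
@[ext]
structure DynnikovPair (K : Type*) [Zero K] [LT K] where
  /-- The counterpart of `aᵢ`. -/
  x : K
  /-- The counterpart of `bᵢ`. -/
  y : K
  x_pos : 0 < x
  y_pos : 0 < y

namespace DynnikovPair

variable {K : Type*} [Field K] [LinearOrder K]

/-- The first of the two auxiliary quantities that `DynnikovPair.crossing` transports from one
strand to the other. -/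
def upper (a : DynnikovPair K) : K := a.x * (1 + a.y)

/-- The second of the two auxiliary quantities that `DynnikovPair.crossing` transports from one
strand to the other. The duality `(x, y) ↦ (x⁻¹, y⁻¹)` exchanges it with the inverse of `upper`. -/
def lower (a : DynnikovPair K) : K := a.x * a.y / (1 + a.y)

theorem ext_x_upper {a b : DynnikovPair K} (hx : a.x = b.x) (hupper : a.upper = b.upper) :
    a = b := by
  refine DynnikovPair.ext hx ?_
  rw [upper, upper, hx] at hupper
  exact add_left_cancel (mul_left_cancel₀ b.x_pos.ne' hupper)

variable [IsStrictOrderedRing K]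

theorem ext_x_lower {a b : DynnikovPair K} (hx : a.x = b.x) (hlower : a.lower = b.lower) :
    a = b := by
  have := a.y_pos
  have := b.y_pos
  refine DynnikovPair.ext hx ?_
  rw [lower, lower, hx, mul_div_assoc, mul_div_assoc] at hlower
  have h := mul_left_cancel₀ b.x_pos.ne' hlower
  field_simp at h
  linarith

theorem ext_y_upper {a b : DynnikovPair K} (hy : a.y = b.y) (hupper : a.upper = b.upper) :
    a = b := by
  have := b.y_pos
  refine DynnikovPair.ext ?_ hy
  rw [upper, upper, hy] at hupper
  exact mul_right_cancel₀ (by positivity) hupper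

/-- The first strand after a positive crossing of the strands `a` and `b`. -/
def crossFst (a b : DynnikovPair K) : DynnikovPair K where
  x := a.x + a.y * (a.x + b.x)
  y := a.y * b.y * b.x / (a.y * b.x + a.x * (1 + a.y) * (1 + b.y))
  x_pos := by
    have := a.x_pos; have := a.y_pos; have := b.x_pos
    positivity
  y_pos := by
    have := a.x_pos; have := a.y_pos; have := b.x_pos; have := b.y_pos
    positivity

/-- The second strand after a positive crossing of the strands `a` and `b`. -/
def crossSnd (a b : DynnikovPair K) : DynnikovPair K where
  x := a.x * b.x * b.y / (b.x + a.x * (1 + b.y))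
  y := (a.y * b.x + a.x * (1 + a.y) * (1 + b.y)) / b.x
  x_pos := by
    have := a.x_pos; have := b.x_pos; have := b.y_pos
    positivity
  y_pos := by
    have := a.x_pos; have := a.y_pos; have := b.x_pos; have := b.y_pos
    positivity

section Transport

variable (a b : DynnikovPair K)

theorem x_lt_x_crossFst : a.x < (crossFst a b).x :=
  lt_add_of_pos_right _ (mul_pos a.y_pos (add_pos a.x_pos b.x_pos))

theorem x_crossFst : (crossFst a b).x = a.upper + a.y * b.x := by
  simp only [crossFst, upper]
  ring

theorem inv_x_crossSnd : (crossSnd a b).x⁻¹ = b.lower⁻¹ + (b.y * a.x)⁻¹ := by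
  have := a.x_pos; have := b.x_pos; have := b.y_pos
  simp only [crossSnd, lower]
  field_simp
  ring

theorem upper_crossSnd : (crossSnd a b).upper = a.upper * b.y := by
  have := a.x_pos; have := b.x_pos; have := b.y_pos
  simp only [crossSnd, upper]
  field_simp
  ring

theorem lower_crossFst : (crossFst a b).lower = a.y * b.lower := by
  have := a.x_pos; have := a.y_pos; have := b.x_pos; have := b.y_pos
  simp only [crossFst, lower]
  field_simp
  ring

theorem y_crossFst_mul_y_crossSnd : (crossFst a b).y * (crossSnd a b).y = a.y * b.y := by
  have := a.x_pos; have := a.y_pos; have := b.x_pos; have := b.y_pos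
  simp only [crossFst, crossSnd]
  field_simp

theorem upper_crossFst_add :
    (crossFst a b).upper + (crossFst a b).y * (crossSnd a b).upper = a.upper + a.y * b.upper := by
  have := a.x_pos; have := a.y_pos; have := b.x_pos; have := b.y_pos
  simp only [crossFst, crossSnd, upper]
  field_simp
  ring

theorem inv_lower_crossSnd_add :
    (crossSnd a b).lower⁻¹ + ((crossSnd a b).y * (crossFst a b).lower)⁻¹ =
      b.lower⁻¹ + (b.y * a.lower)⁻¹ := by
  have := a.x_pos; have := a.y_pos; have := b.x_pos; have := b.y_pos
  simp only [crossFst, crossSnd, lower]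
  field_simp
  ring

end Transport

theorem crossFst_braid (a b c : DynnikovPair K) :
    crossFst (crossFst a b) (crossFst (crossSnd a b) c) = crossFst a (crossFst b c) := by
  refine ext_x_lower ?_ ?_
  · calc
      _ = (crossFst a b).upper + (crossFst a b).y * (crossSnd a b).upper +
            (crossFst a b).y * (crossSnd a b).y * c.x := by
        rw [x_crossFst, x_crossFst]; ring
      _ = a.upper + a.y * b.upper + a.y * b.y * c.x := by
        rw [upper_crossFst_add, y_crossFst_mul_y_crossSnd]
      _ = _ := by rw [x_crossFst, x_crossFst]; ring
  · rw [lower_crossFst, lower_crossFst, lower_crossFst, lower_crossFst, ← mul_assoc,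
      y_crossFst_mul_y_crossSnd, mul_assoc]

theorem crossSnd_braid (a b c : DynnikovPair K) :
    crossSnd (crossSnd a b) c = crossSnd (crossSnd a (crossFst b c)) (crossSnd b c) := by
  refine ext_x_upper (inv_injective ?_) ?_
  · symm
    calc
      _ = (crossSnd b c).lower⁻¹ + ((crossSnd b c).y * (crossFst b c).lower)⁻¹ +
            ((crossFst b c).y * (crossSnd b c).y * a.x)⁻¹ := by
        rw [inv_x_crossSnd, mul_inv, inv_x_crossSnd]; simp only [mul_inv]; ring
      _ = c.lower⁻¹ + (c.y * b.lower)⁻¹ + (b.y * c.y * a.x)⁻¹ := by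
        rw [inv_lower_crossSnd_add, y_crossFst_mul_y_crossSnd]
      _ = _ := by
        rw [inv_x_crossSnd, mul_inv _ (crossSnd a b).x, inv_x_crossSnd]; simp only [mul_inv]; ring
  · rw [upper_crossSnd, upper_crossSnd, upper_crossSnd, upper_crossSnd, mul_assoc, mul_assoc,
      y_crossFst_mul_y_crossSnd]

theorem crossSnd_crossFst_braid (a b c : DynnikovPair K) :
    crossSnd (crossFst a b) (crossFst (crossSnd a b) c) =
      crossFst (crossSnd a (crossFst b c)) (crossSnd b c) := by
  set p := crossFst a b
  set q := crossSnd a b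
  set u := crossFst b c
  set v := crossSnd b c
  set a₁ := crossFst p (crossFst q c)
  set a₂ := crossSnd p (crossFst q c)
  set a₃ := crossSnd q c
  set b₁ := crossFst a u
  set b₂ := crossFst (crossSnd a u) v
  set b₃ := crossSnd (crossSnd a u) v
  have hfst : a₁ = b₁ := crossFst_braid a b c
  have hsnd : a₃ = b₃ := crossSnd_braid a b c
  -- The outer strands agree, and each crossing preserves `y₁ y₂ y₃` and
  -- `upper₁ + y₁ upper₂ + y₁ y₂ upper₃`.
  have hprod : a₁.y * a₂.y * a₃.y = b₁.y * b₂.y * b₃.y := by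
    linear_combination a₃.y * y_crossFst_mul_y_crossSnd p (crossFst q c) +
      p.y * y_crossFst_mul_y_crossSnd q c + c.y * y_crossFst_mul_y_crossSnd a b -
      b₁.y * y_crossFst_mul_y_crossSnd (crossSnd a u) v -
      v.y * y_crossFst_mul_y_crossSnd a u - a.y * y_crossFst_mul_y_crossSnd b c
  have hsum : a₁.upper + a₁.y * a₂.upper + a₁.y * a₂.y * a₃.upper =
      b₁.upper + b₁.y * b₂.upper + b₁.y * b₂.y * b₃.upper := by
    linear_combination upper_crossFst_add p (crossFst q c) +
      a₃.upper * y_crossFst_mul_y_crossSnd p (crossFst q c) + p.y * upper_crossFst_add q c +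
      upper_crossFst_add a b + c.upper * y_crossFst_mul_y_crossSnd a b -
      b₁.y * upper_crossFst_add (crossSnd a u) v - upper_crossFst_add a u -
      v.upper * y_crossFst_mul_y_crossSnd a u - a.y * upper_crossFst_add b c
  rw [hfst, hsnd] at hprod hsum
  have hy : a₂.y = b₂.y :=
    mul_left_cancel₀ b₁.y_pos.ne' (mul_right_cancel₀ b₃.y_pos.ne' hprod)
  rw [hy] at hsum
  exact ext_y_upper hy
    (mul_left_cancel₀ b₁.y_pos.ne' (add_left_cancel (add_right_cancel hsum)))

/-- The involution of Dynnikov pairs that turns positive crossings into negative ones. -/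
def invX (a : DynnikovPair K) : DynnikovPair K where
  x := a.x⁻¹
  y := a.y
  x_pos := inv_pos.2 a.x_pos
  y_pos := a.y_pos

theorem invX_invX (a : DynnikovPair K) : a.invX.invX = a :=
  DynnikovPair.ext (inv_inv a.x) rfl

theorem crossFst_invX_crossFst_invX_crossSnd (a b : DynnikovPair K) :
    crossFst (crossFst a b).invX (crossSnd a b).invX = a.invX := by
  have := a.x_pos; have := a.y_pos; have := b.x_pos; have := b.y_pos
  refine DynnikovPair.ext ?_ ?_ <;> simp only [crossFst, crossSnd, invX] <;> field_simp <;> ring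

theorem crossSnd_invX_crossFst_invX_crossSnd (a b : DynnikovPair K) :
    crossSnd (crossFst a b).invX (crossSnd a b).invX = b.invX := by
  have := a.x_pos; have := a.y_pos; have := b.x_pos; have := b.y_pos
  refine DynnikovPair.ext ?_ ?_ <;> simp only [crossFst, crossSnd, invX] <;> field_simp <;> ring

/-- The action of a positive crossing on two adjacent strands. -/
def crossing : Perm (DynnikovPair K × DynnikovPair K) where
  toFun p := (crossFst p.1 p.2, crossSnd p.1 p.2)
  invFun p :=
    ((crossFst (invX p.1) (invX p.2)).invX, (crossSnd (invX p.1) (invX p.2)).invX)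
  left_inv p := by
    simp only [crossFst_invX_crossFst_invX_crossSnd, crossSnd_invX_crossFst_invX_crossSnd,
      invX_invX]
  right_inv p := by
    simp only [crossFst_invX_crossFst_invX_crossSnd, crossSnd_invX_crossFst_invX_crossSnd,
      invX_invX]

theorem isYangBaxter_crossing : IsYangBaxter (crossing (K := K)) := by
  ext1 ⟨a, b, c⟩
  exact Prod.ext (crossFst_braid a b c)
    (Prod.ext (crossSnd_crossFst_braid a b c) (crossSnd_braid a b c))

instance : Inhabited (DynnikovPair K) :=
  ⟨⟨1, 1, one_pos, one_pos⟩⟩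

end DynnikovPair

theorem free_shelf_division_acyclic_general {S : Type*} [Shelf S]
    (hfree : ∀ (S' : Type v) [Shelf S'] [Nonempty S'], Nonempty (ShelfHom S S')) (a : S) :
    ¬ Relation.TransGen shelfDiv a a := by
  let : Shelf (Perm (Stream' (DynnikovPair ℚ))) :=
    DynnikovPair.isYangBaxter_crossing.braidShift.shelf
  obtain ⟨φ⟩ := hfree (ULift.{v} (Perm (Stream' (DynnikovPair ℚ))))
  refine not_transGen_shelfDiv_of_act_lt
    (d := fun b => ((φ b).down⁻¹ (Stream'.const default)).head.x) (fun b c => ?_) a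
  rw [φ.map_act]
  exact DynnikovPair.isYangBaxter_crossing.height_head_inv_bracket_lt
    DynnikovPair.x_lt_x_crossFst _ _ _

/-- division in a free monogenerated left-shelf has no cycle:
if `S` is generated by `g` and free based on `g`, then `⊏*` is irreflexive. -/
theorem free_shelf_division_acyclic {S : Type*} [Shelf S] (g : S)
    (hgen : ∀ P : S → Prop, P g →
      (∀ a b, P a → P b → P (Shelf.act a b)) → ∀ a, P a)
    (hfree : ∀ (S' : Type v) [Shelf S'] (g' : S'),
      ∃ φ : S → S', φ g = g' ∧
        ∀ a b : S, φ (Shelf.act a b) = Shelf.act (φ a) (φ b)) :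
    ∀ a : S, ¬ Relation.TransGen shelfDiv a a :=
  free_shelf_division_acyclic_general fun S' _ ⟨g'⟩ =>
    let ⟨φ, _, hφ⟩ := hfree S' g'
    ⟨⟨φ, hφ _ _⟩⟩
end
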